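/- Let K be an algebraically closed field of characteristic zero and H = (u(x,y), v(x,y,z), h(x,y)) a polynomial map with H(0) = 0, JH nilpotent, and u, v, h linearly independent over K. Write v = v_d z^d + ... + v_1 z + v_0 with v_i ∈ K[x,y]. Suppose additionally there exists q ∈ K[x,y] with u, h ∈ K[q] and deg_y q ≤ 1. Then after the reduction d = 1, v_1 ∈ K^*, there exists a(x) ∈ K[x] with u, h ∈ K[y + a(x)]. -/

import Mathlib

open MvPolynomial

/-!
Write `D` for the derivation `f ↦ f_x q_y - f_y q_x`, which kills `K[q]`. If `u = U(q)` and
`h = G(q)`, the vanishing of the trace and of the sum of the principal `2 × 2` minors of `JH` reads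
`v_y = -U'(q) q_x` and `U'(q) D v = -v₁ G'(q) q_y`. Let `b = q_y`, which depends on `x` only. As
`D b = b b'`, the second identity gives `D (D v) = b' D v`. Since `∂_y D = D ∂_y - b' ∂_y`, each
application of `∂_y` raises the multiplier `k` in `D f = k b' f` by one. The first identity gives
`∂_y (D v) = U'(q) S` with `∂_y S = r = 2 b'² - b b'' = b³ (1 / b)''`, and dividing by `U'(q)`,
which `D` kills, does not affect `k`. Hence `b r' = 3 b' r`, that is, `(1 / b)''' = 0`. Comparing
degrees, the polynomial `b` is constant, so `q = β (y + a(x))`.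
-/

namespace NilpotentJacobian

/-- The numerator `b³ (1 / b)''` of the second derivative of `1 / b`. The operator `d` is a bare
function, so that it may be a `Derivation` as well as the linear map `Polynomial.derivative`. -/
def secondDerivInvNum {A : Type*} [CommRing A] (d : A → A) (b : A) : A :=
  2 * d b ^ 2 - b * d (d b)

section JacobianDerivation

variable {R A : Type*} [CommRing R] [CommRing A] [Algebra R A] (dx dy : Derivation R A A)
  {q v P Q f : A}

/-- The derivation `f ↦ f_x q_y - f_y q_x`, the Jacobian determinant of `(f, q)` with respect to
two given derivations `dx` and `dy`. -/
def jacobianDerivation (q : A) : Derivation R A A := dy q • dx - dx q • dy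

lemma jacobianDerivation_apply (q f : A) :
    jacobianDerivation dx dy q f = dy q * dx f - dx q * dy f := rfl

lemma jacobianDerivation_aeval_self (q : A) (p : Polynomial R) :
    jacobianDerivation dx dy q (Polynomial.aeval q p) = 0 := by
  simp only [jacobianDerivation_apply, Derivation.map_aeval, smul_eq_mul]
  ring

local notation "D" => jacobianDerivation dx dy q

variable {dx dy}

lemma jacobianDerivation_of_dy_eq_zero (hf : dy f = 0) : D f = dy q * dx f := by
  rw [jacobianDerivation_apply, hf, mul_zero, sub_zero]

lemma dx_eq_zero_of_dy_eq_zero [NoZeroDivisors A] (hP₀ : P ≠ 0) (hvy : dy v = -(P * dx q))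
    (hDv : P * D v = Q * dy q) (hq : dy q = 0) : dx q = 0 := by
  have hsq : (P * dx q) ^ 2 = 0 := by
    rw [jacobianDerivation_apply, hvy, hq] at hDv
    linear_combination hDv
  simpa [hP₀] using hsq

variable (hcomm : ∀ f, dx (dy f) = dy (dx f)) (hqq : dy (dy q) = 0)
include hcomm hqq

lemma dy_dx_dy_eq_zero : dy (dx (dy q)) = 0 := by
  rw [← hcomm, hqq, map_zero]

lemma dy_secondDerivInvNum_dx_dy_eq_zero : dy (secondDerivInvNum dx (dy q)) = 0 := by
  have hb := dy_dx_dy_eq_zero hcomm hqq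
  have hbx : dy (dx (dx (dy q))) = 0 := by rw [← hcomm, hb, map_zero]
  have htwo : dy 2 = 0 := mod_cast dy.map_natCast 2
  simp [secondDerivInvNum, Derivation.leibniz_pow, hb, hbx, hqq, htwo]

lemma dy_jacobianDerivation (f : A) : dy (D f) = D (dy f) - dx (dy q) * dy f := by
  simp only [jacobianDerivation_apply, Derivation.map_sub, Derivation.leibniz, smul_eq_mul, hqq,
    hcomm]
  ring

lemma jacobianDerivation_apply_eq_succ_mul (k : ℕ) (hf : D f = k * (dx (dy q) * f)) :
    D (dy f) = (k + 1 : ℕ) * (dx (dy q) * dy f) := by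
  have hdy := congrArg dy hf
  simp only [dy_jacobianDerivation hcomm hqq, Derivation.leibniz, smul_eq_mul,
    dy_dx_dy_eq_zero hcomm hqq, Derivation.map_natCast] at hdy
  push_cast
  linear_combination hdy

lemma dy_jacobianDerivation_eq_mul (hP : D P = 0) (hv : dy v = -(P * dx q)) :
    dy (D v) = P * (dx (dy q) * dx q - D (dx q)) := by
  rw [dy_jacobianDerivation hcomm hqq, hv, map_neg, Derivation.leibniz, hP]
  simp only [smul_eq_mul]
  ring

lemma dy_mul_sub_jacobianDerivation_eq_secondDerivInvNum :
    dy (dx (dy q) * dx q - D (dx q)) = secondDerivInvNum dx (dy q) := by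
  have hb := dy_dx_dy_eq_zero hcomm hqq
  rw [map_sub, dy_jacobianDerivation hcomm hqq, Derivation.leibniz, hb, ← hcomm q,
    jacobianDerivation_of_dy_eq_zero hb]
  simp only [smul_eq_mul, secondDerivInvNum]
  ring

lemma mul_dx_secondDerivInvNum_eq [NoZeroDivisors A] (hP₀ : P ≠ 0) (hP : D P = 0)
    (hQ : D Q = 0) (hvy : dy v = -(P * dx q)) (hDv : P * D v = Q * dy q) :
    dy q * dx (secondDerivInvNum dx (dy q)) = 3 * (dx (dy q) * secondDerivInvNum dx (dy q)) := by
  have eigen_Dv : D (D v) = (1 : ℕ) * (dx (dy q) * D v) := by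
    have h := congrArg D hDv
    simp only [Derivation.leibniz, smul_eq_mul, hP, hQ,
      jacobianDerivation_of_dy_eq_zero hqq] at h
    apply mul_left_cancel₀ hP₀
    linear_combination h - dx (dy q) * hDv
  have eigen_PS := jacobianDerivation_apply_eq_succ_mul hcomm hqq 1 eigen_Dv
  rw [dy_jacobianDerivation_eq_mul hcomm hqq hP hvy, Derivation.leibniz, hP] at eigen_PS
  have eigen_S : D (dx (dy q) * dx q - D (dx q)) =
      (2 : ℕ) * (dx (dy q) * (dx (dy q) * dx q - D (dx q))) := by
    apply mul_left_cancel₀ hP₀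
    simp only [smul_eq_mul] at eigen_PS
    linear_combination eigen_PS
  have eigen_r := jacobianDerivation_apply_eq_succ_mul hcomm hqq 2 eigen_S
  rw [dy_mul_sub_jacobianDerivation_eq_secondDerivInvNum hcomm hqq,
    jacobianDerivation_of_dy_eq_zero (dy_secondDerivInvNum_dx_dy_eq_zero hcomm hqq)] at eigen_r
  exact_mod_cast eigen_r

end JacobianDerivation

section Polynomial

lemma coeff_X_pow_mul_iterate_derivative {R : Type*} [CommSemiring R] (p : Polynomial R)
    (k m : ℕ) : (Polynomial.X ^ k * Polynomial.derivative^[k] p).coeff m =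
      m.descFactorial k * p.coeff m := by
  rw [Polynomial.coeff_X_pow_mul']
  split_ifs with hkm
  · rw [Polynomial.coeff_iterate_derivative, Nat.sub_add_cancel hkm, nsmul_eq_mul]
  · simp [Nat.descFactorial_of_lt (not_le.mp hkm)]

lemma natDegree_X_pow_mul_iterate_derivative_le {R : Type*} [CommSemiring R] (p : Polynomial R)
    (k : ℕ) : (Polynomial.X ^ k * Polynomial.derivative^[k] p).natDegree ≤ p.natDegree := by
  refine Polynomial.natDegree_le_iff_coeff_eq_zero.mpr fun m hm => ?_
  rw [coeff_X_pow_mul_iterate_derivative, Polynomial.coeff_eq_zero_of_natDegree_lt hm, mul_zero]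

variable {R : Type*} [CommRing R] [NoZeroDivisors R] [CharZero R] {b r : Polynomial R}

lemma natDegree_eq_mul_natDegree_of_mul_derivative_eq (k : ℕ) (hb : b ≠ 0) (hr : r ≠ 0)
    (h : b * r.derivative = k * (b.derivative * r)) : r.natDegree = k * b.natDegree := by
  have hX : b * (Polynomial.X ^ 1 * Polynomial.derivative^[1] r) =
      Polynomial.C (k : R) * (Polynomial.X ^ 1 * Polynomial.derivative^[1] b * r) := by
    simp only [pow_one, Function.iterate_one, map_natCast]
    linear_combination Polynomial.X * h
  have hcoeff := congrArg (Polynomial.coeff · (b.natDegree + r.natDegree)) hX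
  simp only [Polynomial.coeff_C_mul,
    Polynomial.coeff_mul_add_eq_of_natDegree_le le_rfl
      (natDegree_X_pow_mul_iterate_derivative_le r 1),
    Polynomial.coeff_mul_add_eq_of_natDegree_le
      (natDegree_X_pow_mul_iterate_derivative_le b 1) le_rfl,
    coeff_X_pow_mul_iterate_derivative, Nat.descFactorial_one, Polynomial.coeff_natDegree] at hcoeff
  have hlead : b.leadingCoeff * r.leadingCoeff ≠ 0 := by simp [hb, hr]
  have hcast : (r.natDegree : R) = k * b.natDegree := by
    apply mul_left_cancel₀ hlead
    linear_combination hcoeff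
  exact_mod_cast hcast

lemma secondDerivInvNum_ne_zero (hb : b.natDegree ≠ 0) :
    secondDerivInvNum Polynomial.derivative b ≠ 0 := by
  intro h
  have hX : Polynomial.C 2 * ((Polynomial.X ^ 1 * Polynomial.derivative^[1] b) *
        (Polynomial.X ^ 1 * Polynomial.derivative^[1] b)) -
      b * (Polynomial.X ^ 2 * Polynomial.derivative^[2] b) = 0 := by
    simp only [pow_one, Function.iterate_succ_apply', Function.iterate_zero_apply, map_ofNat]
    rw [secondDerivInvNum] at h
    linear_combination Polynomial.X ^ 2 * h
  have hcoeff := congrArg (Polynomial.coeff · (b.natDegree + b.natDegree)) hX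
  simp only [Polynomial.coeff_sub, Polynomial.coeff_C_mul, Polynomial.coeff_zero,
    Polynomial.coeff_mul_add_eq_of_natDegree_le
      (natDegree_X_pow_mul_iterate_derivative_le b 1)
      (natDegree_X_pow_mul_iterate_derivative_le b 1),
    Polynomial.coeff_mul_add_eq_of_natDegree_le le_rfl
      (natDegree_X_pow_mul_iterate_derivative_le b 2),
    coeff_X_pow_mul_iterate_derivative, Nat.descFactorial_one, Nat.cast_descFactorial_two,
    Polynomial.coeff_natDegree] at hcoeff
  have hprod : (b.natDegree : R) * (b.natDegree + 1 : ℕ) * b.leadingCoeff ^ 2 = 0 := by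
    push_cast
    linear_combination hcoeff
  have hb₀ : b ≠ 0 := Polynomial.ne_zero_of_natDegree_gt (Nat.pos_of_ne_zero hb)
  simp [hb, hb₀, Nat.cast_add_one_ne_zero] at hprod

lemma natDegree_eq_zero_of_mul_derivative_secondDerivInvNum_eq
    (h : b * (secondDerivInvNum Polynomial.derivative b).derivative =
      3 * (b.derivative * secondDerivInvNum Polynomial.derivative b)) :
    b.natDegree = 0 := by
  by_contra hn
  have hb : b ≠ 0 := Polynomial.ne_zero_of_natDegree_gt (Nat.pos_of_ne_zero hn)
  have hdeg := natDegree_eq_mul_natDegree_of_mul_derivative_eq 3 hb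
    (secondDerivInvNum_ne_zero hn) (mod_cast h)
  have hle : (secondDerivInvNum Polynomial.derivative b).natDegree ≤ 2 * b.natDegree := by
    rw [secondDerivInvNum]
    compute_degree
    grind [Polynomial.natDegree_derivative_le]
  omega

end Polynomial

section MvPolynomial

variable {σ R : Type*}

lemma pderiv_comm [CommRing R] (i j : σ) (f : MvPolynomial σ R) :
    pderiv i (pderiv j f) = pderiv j (pderiv i f) := by
  classical
  have hlie : ⁅pderiv (R := R) i, pderiv j⁆ = 0 := derivation_ext fun k => by
    rw [Derivation.commutator_apply, pderiv_X, pderiv_X, Pi.single_apply, Pi.single_apply]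
    split_ifs <;> simp
  rw [← sub_eq_zero, ← Derivation.commutator_apply, hlie, Derivation.zero_apply]

lemma pderiv_pderiv_eq_zero_of_degreeOf_le_one [CommSemiring R] {i : σ} {f : MvPolynomial σ R}
    (hf : degreeOf i f ≤ 1) : pderiv i (pderiv i f) = 0 := by
  ext s
  have : coeff (s + Finsupp.single i 1 + Finsupp.single i 1) f = 0 := by
    by_contra hne
    simpa using degreeOf_le_iff.mp hf _ (mem_support_iff.mpr hne)
  simp [coeff_pderiv, this]

lemma pderiv_aeval_X [CommSemiring R] (i : σ) (p : Polynomial R) :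
    pderiv i (Polynomial.aeval (X i) p) =
      Polynomial.aeval (X i : MvPolynomial σ R) (Polynomial.derivative p) := by
  rw [Derivation.map_aeval, pderiv_X_self, smul_eq_mul, mul_one]

lemma aeval_X_secondDerivInvNum [CommRing R] (i : σ) (p : Polynomial R) :
    Polynomial.aeval (X i : MvPolynomial σ R) (secondDerivInvNum Polynomial.derivative p) =
      secondDerivInvNum (pderiv i) (Polynomial.aeval (X i) p) := by
  simp only [secondDerivInvNum, map_sub, map_mul, map_pow, map_ofNat, pderiv_aeval_X]

lemma notMem_vars_of_pderiv_eq_zero [CommSemiring R] [NoZeroDivisors R] [CharZero R] {i : σ}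
    {f : MvPolynomial σ R} (hf : pderiv i f = 0) : i ∉ f.vars := by
  rw [mem_vars_iff_mem_support]
  rintro ⟨s, hs, his⟩
  have hcoeff : coeff (s - Finsupp.single i 1) (pderiv i f) = 0 := by rw [hf, coeff_zero]
  rw [coeff_pderiv, Finsupp.sub_add_single_one_cancel (Finsupp.mem_support_iff.mp his)] at hcoeff
  exact (mul_ne_zero (mem_support_iff.mp hs) (Nat.cast_add_one_ne_zero _)) hcoeff

lemma eq_C_of_forall_pderiv_eq_zero [CommSemiring R] [NoZeroDivisors R] [CharZero R]
    {f : MvPolynomial σ R} (hf : ∀ i, pderiv i f = 0) : f = C (constantCoeff f) :=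
  vars_eq_empty_iff_eq_C.mp <|
    Finset.eq_empty_of_forall_notMem fun i => notMem_vars_of_pderiv_eq_zero (hf i)

lemma aeval_derivative_ne_zero [CommSemiring R] [NoZeroDivisors R] [CharZero R]
    {q : MvPolynomial σ R} {p : Polynomial R}
    (hp : Polynomial.aeval q p ≠ C (constantCoeff (Polynomial.aeval q p))) :
    Polynomial.aeval q p.derivative ≠ 0 := fun hzero =>
  hp <| eq_C_of_forall_pderiv_eq_zero fun i => by rw [Derivation.map_aeval, hzero, zero_smul]

lemma exists_eq_aeval_X_of_pderiv_eq_zero [CommSemiring R] [NoZeroDivisors R] [CharZero R] {i : σ}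
    {f : MvPolynomial σ R} (hf : ∀ j ≠ i, pderiv j f = 0) :
    ∃ p : Polynomial R, f = Polynomial.aeval (X i) p := by
  have hmem : f ∈ supported R {i} := mem_supported.mpr fun j hj => by
    by_contra hji
    exact notMem_vars_of_pderiv_eq_zero (hf j hji) hj
  rw [supported_eq_adjoin_X, Set.image_singleton, Algebra.adjoin_singleton_eq_range_aeval] at hmem
  exact hmem.imp fun _ => Eq.symm

lemma exists_eq_C_mul_X_add_aeval_X {K : Type*} [Field K] [CharZero K] {i j : σ} (hij : i ≠ j)
    {f : MvPolynomial σ K} {β : K} (hβ : β ≠ 0) (hj : pderiv j f = C β)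
    (hf : ∀ k, k ≠ i → k ≠ j → pderiv k f = 0) :
    ∃ a : Polynomial K, f = C β * (X j + Polynomial.aeval (X i) a) := by
  have hC : (C β * C β⁻¹ : MvPolynomial σ K) = 1 := by rw [← C_mul, mul_inv_cancel₀ hβ, C_1]
  obtain ⟨a, ha⟩ := exists_eq_aeval_X_of_pderiv_eq_zero (i := i) (f := C β⁻¹ * f - X j) <| by
    intro k hki
    rcases eq_or_ne k j with rfl | hkj
    · rw [map_sub, pderiv_C_mul, hj, pderiv_X_self, mul_comm, hC, sub_self]
    · rw [map_sub, pderiv_C_mul, hf k hki hkj, pderiv_X_of_ne hkj.symm, mul_zero, sub_zero]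
  refine ⟨a, ?_⟩
  rw [← ha]
  linear_combination -f * hC

lemma exists_eq_C_of_mul_pderiv_secondDerivInvNum_eq [CommRing R] [NoZeroDivisors R] [CharZero R]
    {i : σ} {f : MvPolynomial σ R} (hf : ∀ j ≠ i, pderiv j f = 0)
    (h : f * pderiv i (secondDerivInvNum (pderiv i) f) =
      3 * (pderiv i f * secondDerivInvNum (pderiv i) f)) :
    ∃ β, f = C β := by
  obtain ⟨b, rfl⟩ := exists_eq_aeval_X_of_pderiv_eq_zero hf
  rw [← aeval_X_secondDerivInvNum, pderiv_aeval_X, pderiv_aeval_X] at h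
  have hb : b.natDegree = 0 := natDegree_eq_zero_of_mul_derivative_secondDerivInvNum_eq <|
    transcendental_iff_injective.mp (transcendental_X R i) <| by
      simpa only [map_mul, map_ofNat] using h
  refine ⟨b.coeff 0, ?_⟩
  rw [Polynomial.eq_C_of_natDegree_eq_zero hb, Polynomial.aeval_C, algebraMap_eq,
    Polynomial.coeff_C_zero]

end MvPolynomial

lemma sum_principal_minors_eq_zero_of_isNilpotent {A : Type*} [CommRing A] [NoZeroDivisors A]
    [NeZero (2 : A)] {M : Matrix (Fin 3) (Fin 3) A} (hM : IsNilpotent M) :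
    M 0 0 * M 1 1 - M 0 1 * M 1 0 + (M 0 0 * M 2 2 - M 0 2 * M 2 0) +
      (M 1 1 * M 2 2 - M 1 2 * M 2 1) = 0 := by
  have htr := (Matrix.isNilpotent_trace_of_isNilpotent hM).eq_zero
  have htr_sq := (Matrix.isNilpotent_trace_of_isNilpotent
    (Commute.isNilpotent_mul_left (Commute.refl M) hM)).eq_zero
  simp only [Matrix.trace_fin_three, Matrix.mul_apply, Fin.sum_univ_three] at htr htr_sq
  apply mul_left_cancel₀ (two_ne_zero (α := A))
  linear_combination (M 0 0 + M 1 1 + M 2 2) * htr - htr_sq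

section JacobianMatrix

variable {R : Type*} [CommRing R] [NoZeroDivisors R] [CharZero R] {v q : MvPolynomial (Fin 3) R}
  {c : R} {U G : Polynomial R}

lemma jacobianDerivation_eq_of_isNilpotent (hq : pderiv 2 q = 0) (hv : pderiv 2 v = C c)
    (hnil : IsNilpotent (Matrix.of fun i j : Fin 3 =>
      pderiv j (![Polynomial.aeval q U, v, Polynomial.aeval q G] i))) :
    pderiv 1 v = -(Polynomial.aeval q U.derivative * pderiv 0 q) ∧
      Polynomial.aeval q U.derivative * jacobianDerivation (pderiv 0) (pderiv 1) q v =
        Polynomial.aeval q (-(Polynomial.C c * G.derivative)) * pderiv 1 q := by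
  have htr := (Matrix.isNilpotent_trace_of_isNilpotent hnil).eq_zero
  have hminors := sum_principal_minors_eq_zero_of_isNilpotent hnil
  simp only [Matrix.trace_fin_three, Matrix.of_apply, Matrix.cons_val, Derivation.map_aeval,
    smul_eq_mul, hq, hv] at htr hminors
  rw [jacobianDerivation_apply, map_neg, map_mul, Polynomial.aeval_C, algebraMap_eq]
  constructor
  · linear_combination htr
  · linear_combination -hminors

lemma pderiv_one_ne_zero (hu : Polynomial.aeval q U ≠ C (constantCoeff (Polynomial.aeval q U)))
    (hq : pderiv 2 q = 0) (hv : pderiv 1 v = -(Polynomial.aeval q U.derivative * pderiv 0 q))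
    {Q : MvPolynomial (Fin 3) R}
    (hDv : Polynomial.aeval q U.derivative * jacobianDerivation (pderiv 0) (pderiv 1) q v =
      Q * pderiv 1 q) : pderiv 1 q ≠ 0 := by
  intro hq1
  have hq0 := dx_eq_zero_of_dy_eq_zero (aeval_derivative_ne_zero hu) hv hDv hq1
  refine hu (eq_C_of_forall_pderiv_eq_zero fun i => ?_)
  rw [Derivation.map_aeval]
  fin_cases i <;> simp [hq0, hq1, hq]

end JacobianMatrix

end NilpotentJacobian

open NilpotentJacobian

theorem stmt_18_general (K : Type*) [Field K] [CharZero K] (u v h q : MvPolynomial (Fin 3) K)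
    (c : K) (hv2 : pderiv 2 v = C c) (hq2 : pderiv 2 q = 0) (hu : u ≠ C (constantCoeff u))
    (hnil : IsNilpotent (Matrix.of fun i j : Fin 3 => pderiv j (![u, v, h] i)))
    (U G : Polynomial K) (hU : u = Polynomial.aeval q U) (hG : h = Polynomial.aeval q G)
    (hqdeg : degreeOf 1 q ≤ 1) :
    ∃ a U' G' : Polynomial K, u = Polynomial.aeval (X 1 + Polynomial.aeval (X 0) a) U' ∧
      h = Polynomial.aeval (X 1 + Polynomial.aeval (X 0) a) G' := by
  subst hU hG
  obtain ⟨hvy, hDv⟩ := jacobianDerivation_eq_of_isNilpotent hq2 hv2 hnil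
  have hqq : pderiv 1 (pderiv 1 q) = 0 := pderiv_pderiv_eq_zero_of_degreeOf_le_one hqdeg
  have hode := mul_dx_secondDerivInvNum_eq (pderiv_comm 0 1) hqq
    (aeval_derivative_ne_zero hu) (jacobianDerivation_aeval_self _ _ q _)
    (jacobianDerivation_aeval_self _ _ q _) hvy hDv
  obtain ⟨β, hβ⟩ : ∃ β, pderiv 1 q = C β := exists_eq_C_of_mul_pderiv_secondDerivInvNum_eq (i := 0)
    (by simpa [Fin.forall_fin_succ, hqq, pderiv_comm 2 1 q] using by rw [hq2, map_zero]) hode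
  have hβ₀ : β ≠ 0 := by
    rintro rfl
    exact pderiv_one_ne_zero hu hq2 hvy hDv (hβ.trans C_0)
  obtain ⟨a, ha⟩ := exists_eq_C_mul_X_add_aeval_X (i := 0) (by decide) hβ₀ hβ
    (by simpa [Fin.forall_fin_succ] using hq2)
  have hq : q = Polynomial.aeval (X 1 + Polynomial.aeval (X 0) a)
      (Polynomial.C β * Polynomial.X) := by simpa using ha
  refine ⟨a, U.comp (Polynomial.C β * Polynomial.X), G.comp (Polynomial.C β * Polynomial.X), ?_, ?_⟩
    <;> rw [Polynomial.aeval_comp, ← hq]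

/-- Statement 18: For `H = (u(x,y), v₁z + v₀(x,y), h(x,y))` with `H(0) = 0`, `JH` nilpotent,
components linearly independent, `v₁ ∈ K*`, and `u, h ∈ K[q]` for some `q ∈ K[x,y]` with
`deg_y q ≤ 1`, there is `a(x) ∈ K[x]` such that `u, h ∈ K[y + a(x)]`. -/
theorem stmt_18 (K : Type*) [Field K] [IsAlgClosed K] [CharZero K]
    (u v₀ h q : MvPolynomial (Fin 3) K) (v₁ : K) (hv₁ : v₁ ≠ 0)
    (hu2 : pderiv (2 : Fin 3) u = 0) (hv02 : pderiv (2 : Fin 3) v₀ = 0)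
    (hh2 : pderiv (2 : Fin 3) h = 0) (hq2 : pderiv (2 : Fin 3) q = 0)
    (hu0 : MvPolynomial.constantCoeff u = 0)
    (hv0 : MvPolynomial.constantCoeff (MvPolynomial.C v₁ * MvPolynomial.X 2 + v₀) = 0)
    (hh0 : MvPolynomial.constantCoeff h = 0)
    (hnil : IsNilpotent (Matrix.of fun i j : Fin 3 =>
      pderiv j (![u, MvPolynomial.C v₁ * MvPolynomial.X 2 + v₀, h] i)))
    (hindep : LinearIndependent K ![u, MvPolynomial.C v₁ * MvPolynomial.X 2 + v₀, h])
    (U G : Polynomial K)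
    (hU : u = Polynomial.aeval q U) (hG : h = Polynomial.aeval q G)
    (hqdeg : MvPolynomial.degreeOf (1 : Fin 3) q ≤ 1) :
    ∃ a : Polynomial K, ∃ U' G' : Polynomial K,
      u = Polynomial.aeval
        (MvPolynomial.X (1 : Fin 3) + Polynomial.aeval (MvPolynomial.X (0 : Fin 3)) a) U' ∧
      h = Polynomial.aeval
        (MvPolynomial.X (1 : Fin 3) + Polynomial.aeval (MvPolynomial.X (0 : Fin 3)) a) G' :=
  stmt_18_general K u _ h q v₁ (by simp [hv02]) hq2 (by simpa [hu0] using hindep.ne_zero 0)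
    hnil U G hU hG hqdeg
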